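/- Let S be a nonempty set, A a nonempty finite set, H > 0 a constant, and let φ_1,…,φ_N : S × A → ℝ^d be feature maps with ‖φ_j(s,a)‖₂ ≤ 1 for all j ∈ [N] and (s,a) ∈ S × A. For parameters (w_j)_{j∈[N]} with w_j ∈ ℝ^d and symmetric positive semidefinite matrices (A_j)_{j∈[N]} in ℝ^{d×d}, define V_{w,A}(s) = min( min_{j∈[N]} max_{a∈A} [ ⟨w_j, φ_j(s,a)⟩ + √(φ_j(s,a)ᵀ A_j φ_j(s,a)) ] , H ). Then for any two parameter tuples (w^{(1)}, A^{(1)}) and (w^{(2)}, A^{(2)}), sup_{s∈S} |V_{w^{(1)},A^{(1)}}(s) − V_{w^{(2)},A^{(2)}}(s)| ≤ max_{j∈[N]} ‖w_j^{(1)} − w_j^{(2)}‖₂ + max_{j∈[N]} √( ‖A_j^{(1)} − A_j^{(2)}‖_F ). -/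

import Mathlib

/-!
STATEMENT 8: Lipschitz/contraction bound for the optimistic value-function
class: `sup_s |V_{w¹,A¹}(s) − V_{w²,A²}(s)| ≤ max_j ‖w¹_j − w²_j‖₂
  + max_j √‖A¹_j − A²_j‖_F`.
-/

open Finset Matrix

/-- Frobenius norm of a matrix. -/
noncomputable def frobNorm {d : ℕ} (M : Matrix (Fin d) (Fin d) ℝ) : ℝ :=
  Real.sqrt (∑ i, ∑ j, (M i j) ^ 2)

/-- The parametric value function
`V_{w,A}(s) = min( min_j max_a [⟨w_j, φ_j(s,a)⟩ + √(φ_j(s,a)ᵀ A_j φ_j(s,a))], H )`. -/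
noncomputable def Vform {S A : Type*} [Fintype A] [Nonempty A] {d N : ℕ} [NeZero N]
    (Hc : ℝ) (φ : Fin N → S × A → Fin d → ℝ)
    (w : Fin N → Fin d → ℝ) (Amat : Fin N → Matrix (Fin d) (Fin d) ℝ)
    (s : S) : ℝ :=
  min
    (Finset.univ.inf' Finset.univ_nonempty fun j : Fin N =>
      Finset.univ.sup' Finset.univ_nonempty fun a : A =>
        w j ⬝ᵥ φ j (s, a)
          + Real.sqrt (φ j (s, a) ⬝ᵥ (Amat j).mulVec (φ j (s, a))))
    Hc

/-!
Clipping at `Hc`, minima and maxima are all 1-Lipschitz for the sup norm, so it suffices to compare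
the two parameters at a single feature vector `x = φ_j(s, a)`. There Cauchy-Schwarz bounds the
difference of the linear terms by `‖w¹_j - w²_j‖ ‖x‖`. For the square roots,
`|√a - √b| ≤ √|a - b|` reduces to the quadratic form `xᵀ (A¹_j - A²_j) x`, which is the Frobenius
pairing of `A¹_j - A²_j` with the rank-one matrix `x xᵀ`, of Frobenius norm `‖x‖²`.
-/

section Lattice

variable {ι G : Type*} [Lattice G] [AddCommGroup G] [IsOrderedAddMonoid G]
  {s : Finset ι} {f g : ι → G} {c : G}

theorem sup'_sub_sup'_le (hs : s.Nonempty) (h : ∀ i ∈ s, f i - g i ≤ c) :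
    s.sup' hs f - s.sup' hs g ≤ c := by
  refine sub_le_iff_le_add'.2 (sup'_le hs f fun i hi => ?_)
  calc f i ≤ g i + c := sub_le_iff_le_add'.1 (h i hi)
    _ ≤ s.sup' hs g + c := by gcongr; exact le_sup' g hi

theorem inf'_sub_inf'_le (hs : s.Nonempty) (h : ∀ i ∈ s, f i - g i ≤ c) :
    s.inf' hs f - s.inf' hs g ≤ c := by
  refine sub_le_comm.1 (le_inf' hs g fun i hi => sub_le_comm.1 ?_)
  calc s.inf' hs f - g i ≤ f i - g i := by gcongr; exact inf'_le f hi
    _ ≤ c := h i hi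

theorem abs_sup'_sub_sup'_le (hs : s.Nonempty) (h : ∀ i ∈ s, |f i - g i| ≤ c) :
    |s.sup' hs f - s.sup' hs g| ≤ c := by
  simp only [abs_le', neg_sub] at h ⊢
  exact ⟨sup'_sub_sup'_le hs fun i hi => (h i hi).1, sup'_sub_sup'_le hs fun i hi => (h i hi).2⟩

theorem abs_inf'_sub_inf'_le (hs : s.Nonempty) (h : ∀ i ∈ s, |f i - g i| ≤ c) :
    |s.inf' hs f - s.inf' hs g| ≤ c := by
  simp only [abs_le', neg_sub] at h ⊢
  exact ⟨inf'_sub_inf'_le hs fun i hi => (h i hi).1, inf'_sub_inf'_le hs fun i hi => (h i hi).2⟩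

end Lattice

theorem sqrt_sub_sqrt_le_sqrt_abs_sub (a b : ℝ) : √a - √b ≤ √|a - b| := by
  refine sub_le_iff_le_add'.2 (Real.sqrt_le_iff.2 ⟨by positivity, ?_⟩)
  calc a ≤ max b 0 + |a - b| := by linarith [le_max_left b 0, le_abs_self (a - b)]
    _ = √b ^ 2 + √|a - b| ^ 2 := by rw [Real.sq_sqrt', Real.sq_sqrt (abs_nonneg _)]
    _ ≤ (√b + √|a - b|) ^ 2 :=
      pow_add_pow_le (Real.sqrt_nonneg _) (Real.sqrt_nonneg _) two_ne_zero

theorem abs_sqrt_sub_sqrt_le_sqrt_abs_sub (a b : ℝ) : |√a - √b| ≤ √|a - b| :=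
  abs_sub_le_iff.2 ⟨sqrt_sub_sqrt_le_sqrt_abs_sub a b,
    abs_sub_comm a b ▸ sqrt_sub_sqrt_le_sqrt_abs_sub b a⟩

section Matrix

variable {m n : Type*} [Fintype m] [Fintype n]

theorem dotProduct_self_nonneg (x : n → ℝ) : 0 ≤ x ⬝ᵥ x :=
  sum_nonneg fun i _ => mul_self_nonneg (x i)

theorem abs_dotProduct_le_sqrt_mul_sqrt (x y : n → ℝ) :
    |x ⬝ᵥ y| ≤ √(x ⬝ᵥ x) * √(y ⬝ᵥ y) := by
  rw [← Real.sqrt_mul (dotProduct_self_nonneg x)]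
  apply Real.abs_le_sqrt
  simpa only [dotProduct, ← sq] using sum_mul_sq_le_sq_mul_sq univ x y

theorem abs_dotProduct_mulVec_le (M : Matrix m n ℝ) (x : m → ℝ) (y : n → ℝ) :
    |x ⬝ᵥ M *ᵥ y| ≤ √(∑ i, ∑ j, M i j ^ 2) * (√(x ⬝ᵥ x) * √(y ⬝ᵥ y)) := by
  let entries : m × n → ℝ := fun p => M p.1 p.2
  let outer : m × n → ℝ := fun p => x p.1 * y p.2
  have pairing : entries ⬝ᵥ outer = x ⬝ᵥ M *ᵥ y := by
    simp only [entries, outer, dotProduct, mulVec, Fintype.sum_prod_type, mul_sum]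
    exact sum_congr rfl fun i _ => sum_congr rfl fun j _ => by ring
  have entries_sq : entries ⬝ᵥ entries = ∑ i, ∑ j, M i j ^ 2 := by
    simp only [entries, dotProduct, Fintype.sum_prod_type, sq]
  have outer_sq : outer ⬝ᵥ outer = (x ⬝ᵥ x) * (y ⬝ᵥ y) := by
    simp only [outer, dotProduct, Fintype.sum_prod_type, sum_mul_sum, mul_mul_mul_comm]
  rw [← Real.sqrt_mul (dotProduct_self_nonneg x), ← pairing, ← entries_sq, ← outer_sq]
  exact abs_dotProduct_le_sqrt_mul_sqrt entries outer

/-- The optimistic (upper-confidence) value `⟨w, x⟩ + √(xᵀ M x)` of a feature vector `x`: a linear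
estimate plus an exploration bonus. It is the quantity maximized over actions in `Vform`. -/
noncomputable def optimisticValue (w : n → ℝ) (M : Matrix n n ℝ) (x : n → ℝ) : ℝ :=
  w ⬝ᵥ x + √(x ⬝ᵥ M *ᵥ x)

end Matrix

section ValueFunction

variable {d : ℕ}

theorem abs_dotProduct_mulVec_self_le_frobNorm_mul (M : Matrix (Fin d) (Fin d) ℝ)
    (x : Fin d → ℝ) : |x ⬝ᵥ M *ᵥ x| ≤ frobNorm M * √(x ⬝ᵥ x) ^ 2 :=
  sq √(x ⬝ᵥ x) ▸ abs_dotProduct_mulVec_le M x x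

theorem abs_sqrt_dotProduct_mulVec_sub_le (M₁ M₂ : Matrix (Fin d) (Fin d) ℝ) (x : Fin d → ℝ) :
    |√(x ⬝ᵥ M₁ *ᵥ x) - √(x ⬝ᵥ M₂ *ᵥ x)| ≤ √(frobNorm (M₁ - M₂)) * √(x ⬝ᵥ x) :=
  calc |√(x ⬝ᵥ M₁ *ᵥ x) - √(x ⬝ᵥ M₂ *ᵥ x)|
      ≤ √|x ⬝ᵥ M₁ *ᵥ x - x ⬝ᵥ M₂ *ᵥ x| := abs_sqrt_sub_sqrt_le_sqrt_abs_sub _ _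
    _ = √|x ⬝ᵥ (M₁ - M₂) *ᵥ x| := by rw [sub_mulVec, dotProduct_sub]
    _ ≤ √(frobNorm (M₁ - M₂) * √(x ⬝ᵥ x) ^ 2) :=
      Real.sqrt_le_sqrt (abs_dotProduct_mulVec_self_le_frobNorm_mul _ x)
    _ = √(frobNorm (M₁ - M₂)) * √(x ⬝ᵥ x) := by
      rw [Real.sqrt_mul' _ (sq_nonneg _), Real.sqrt_sq (Real.sqrt_nonneg _)]

theorem abs_optimisticValue_sub_le (w₁ w₂ : Fin d → ℝ) (M₁ M₂ : Matrix (Fin d) (Fin d) ℝ)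
    (x : Fin d → ℝ) :
    |optimisticValue w₁ M₁ x - optimisticValue w₂ M₂ x| ≤
      (√((w₁ - w₂) ⬝ᵥ (w₁ - w₂)) + √(frobNorm (M₁ - M₂))) * √(x ⬝ᵥ x) := by
  have linear : |w₁ ⬝ᵥ x - w₂ ⬝ᵥ x| ≤ √((w₁ - w₂) ⬝ᵥ (w₁ - w₂)) * √(x ⬝ᵥ x) := by
    simpa only [sub_dotProduct w₁ w₂ x] using abs_dotProduct_le_sqrt_mul_sqrt (w₁ - w₂) x
  rw [optimisticValue, optimisticValue, add_sub_add_comm, add_mul]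
  exact (abs_add_le _ _).trans (add_le_add linear (abs_sqrt_dotProduct_mulVec_sub_le M₁ M₂ x))

theorem abs_Vform_sub_Vform_le {S A : Type*} [Fintype A] [Nonempty A] {N : ℕ} [NeZero N]
    (Hc : ℝ) (φ : Fin N → S × A → Fin d → ℝ) (w₁ w₂ : Fin N → Fin d → ℝ)
    (M₁ M₂ : Fin N → Matrix (Fin d) (Fin d) ℝ) (s : S) {c : ℝ}
    (h : ∀ j a, |optimisticValue (w₁ j) (M₁ j) (φ j (s, a)) -
      optimisticValue (w₂ j) (M₂ j) (φ j (s, a))| ≤ c) :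
    |Vform Hc φ w₁ M₁ s - Vform Hc φ w₂ M₂ s| ≤ c :=
  (abs_inf_sub_inf_le_abs _ _ Hc).trans <| abs_inf'_sub_inf'_le univ_nonempty fun j _ =>
    abs_sup'_sub_sup'_le univ_nonempty fun a _ => h j a

end ValueFunction

theorem stmt8 {S A : Type*} [Nonempty S] [Fintype A] [Nonempty A]
    {d N : ℕ} [NeZero N]
    (Hc : ℝ) (hHc : 0 < Hc)
    (φ : Fin N → S × A → Fin d → ℝ)
    (hφ : ∀ j sa, Real.sqrt (φ j sa ⬝ᵥ φ j sa) ≤ 1)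
    (w1 w2 : Fin N → Fin d → ℝ)
    (A1 A2 : Fin N → Matrix (Fin d) (Fin d) ℝ)
    (hA1 : ∀ j, (A1 j).PosSemidef) (hA2 : ∀ j, (A2 j).PosSemidef) :
    ∀ s : S,
      |Vform Hc φ w1 A1 s - Vform Hc φ w2 A2 s|
        ≤ (Finset.univ.sup' Finset.univ_nonempty fun j : Fin N =>
              Real.sqrt ((w1 j - w2 j) ⬝ᵥ (w1 j - w2 j)))
          + Finset.univ.sup' Finset.univ_nonempty fun j : Fin N =>
              Real.sqrt (frobNorm (A1 j - A2 j)) := by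
  intro s
  refine abs_Vform_sub_Vform_le Hc φ w1 w2 A1 A2 s fun j a => ?_
  calc |optimisticValue (w1 j) (A1 j) (φ j (s, a)) - optimisticValue (w2 j) (A2 j) (φ j (s, a))|
      ≤ (√((w1 j - w2 j) ⬝ᵥ (w1 j - w2 j)) + √(frobNorm (A1 j - A2 j))) *
          √(φ j (s, a) ⬝ᵥ φ j (s, a)) := abs_optimisticValue_sub_le ..
    _ ≤ √((w1 j - w2 j) ⬝ᵥ (w1 j - w2 j)) + √(frobNorm (A1 j - A2 j)) :=
      mul_le_of_le_one_right (by positivity) (hφ j (s, a))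
    _ ≤ _ := add_le_add
      (le_sup' (fun j => √((w1 j - w2 j) ⬝ᵥ (w1 j - w2 j))) (mem_univ j))
      (le_sup' (fun j => √(frobNorm (A1 j - A2 j))) (mem_univ j))
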